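/- arXiv:2408.02527 — 4 statements merged into one kernel-verified Lean document; each statement's English description precedes it below -/
import Mathlib

section
/- For every natural number n, setting a = 11·(10^(n+2) − 1) (the number with decimal digits 1, 0, followed by n nines, then 8, 9), one has f(a) = 10·a and f(10·a) = a; that is, {a, 10a} is a 2-cycle of the digit-reversal map f. -/
/-!
Put `a = 11 * (10 ^ (n + 2) - 1)`. Its decimal digits are `1, 0, 9, …, 9, 8, 9` with `n` nines in
the middle, so reading them backwards gives `rev a = 99 * (10 ^ (n + 2) - 1) = 9 * a`
(`digits_eleven_mul` and `rev_eleven_mul`). Since a trailing zero is lost under reversal, also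
`rev (10 * a) = 9 * a`. Hence `f a = a + 9 * a = 10 * a` and `f (10 * a) = 10 * a - 9 * a = a`.
-/

def rev (n : ℕ) : ℕ := Nat.ofDigits 10 ((Nat.digits 10 n).reverse)

def f (n : ℕ) : ℕ := if rev n < n then n - rev n else n + rev n

lemma ofDigits_replicate_nine (n : ℕ) :
    Nat.ofDigits 10 (List.replicate n 9) + 1 = 10 ^ n := by
  induction n with
  | zero => simp
  | succ k ih =>
    rw [List.replicate_succ, Nat.ofDigits_cons, pow_succ, ← ih]
    ring

lemma digits_eleven_mul (n : ℕ) :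
    Nat.digits 10 (11 * (10 ^ (n + 2) - 1)) = [9, 8] ++ List.replicate n 9 ++ [0, 1] := by
  have h : 11 * (10 ^ (n + 2) - 1) =
      Nat.ofDigits 10 ([9, 8] ++ List.replicate n 9 ++ [0, 1]) := by
    have h9 := ofDigits_replicate_nine n
    simp only [Nat.ofDigits_append, List.length_append, List.length_replicate, List.length_cons,
      List.length_nil, Nat.ofDigits_cons, Nat.ofDigits_nil, pow_add, pow_zero, pow_one]
    omega
  rw [h]
  refine Nat.digits_ofDigits 10 (by norm_num) _ ?_ (by simp)
  intro l hl
  simp only [List.mem_append, List.mem_replicate, List.mem_cons, List.not_mem_nil,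
    or_false] at hl
  omega

lemma rev_eleven_mul (n : ℕ) :
    rev (11 * (10 ^ (n + 2) - 1)) = 9 * (11 * (10 ^ (n + 2) - 1)) := by
  have h9 := ofDigits_replicate_nine n
  rw [rev, digits_eleven_mul]
  simp only [List.reverse_append, List.reverse_replicate, List.reverse_cons, List.reverse_nil,
    List.nil_append, Nat.ofDigits_append, List.length_append, List.length_replicate,
    List.length_cons, List.length_nil, Nat.ofDigits_cons, Nat.ofDigits_nil, pow_add, pow_zero,
    pow_one]
  omega

lemma rev_ten_mul {m : ℕ} (hm : 0 < m) : rev (10 * m) = rev m := by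
  have h : Nat.digits 10 (10 * m) = 0 :: Nat.digits 10 m := by
    simpa using Nat.digits_add 10 (by norm_num) 0 m (by norm_num) (Or.inr hm.ne')
  simp [rev, h, Nat.ofDigits_append]

theorem two_cycle_family :
    ∀ n : ℕ, f (11 * (10 ^ (n + 2) - 1)) = 10 * (11 * (10 ^ (n + 2) - 1)) ∧
      f (10 * (11 * (10 ^ (n + 2) - 1))) = 11 * (10 ^ (n + 2) - 1) := by
  intro n
  have hr := rev_eleven_mul n
  have hpos : 0 < 11 * (10 ^ (n + 2) - 1) := by
    have : 1 < 10 ^ (n + 2) := Nat.one_lt_pow (by omega) (by norm_num)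
    omega
  generalize 11 * (10 ^ (n + 2) - 1) = a at hr hpos ⊢
  have hr10 := (rev_ten_mul hpos).trans hr
  constructor
  · rw [f, hr, if_neg (by omega)]
    omega
  · rw [f, hr10, if_pos (by omega)]
    omega
end

section
/- For every natural number n, the little-endian base-10 digit list of 11·(10^(n+2) − 1) is [9, 8] ++ (n copies of 9) ++ [0, 1]; that is, Nat.digits 10 (11·(10^(n+2) − 1)) = [9, 8] ++ List.replicate n 9 ++ [0, 1]. -/
/-!
The list `[9, 8] ++ List.replicate n 9 ++ [0, 1]` has entries below 10 and a nonzero last entry, so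
it is the digit list of its value. The tail `9…9, 0, 1` has value `11 * 10 ^ n - 1`, hence
the whole list has value `89 + 100 * (11 * 10 ^ n - 1) = 11 * (10 ^ (n + 2) - 1)`.
-/

theorem ofDigits_nines_tail (n : ℕ) :
    Nat.ofDigits 10 (List.replicate n 9 ++ [0, 1]) + 1 = 11 * 10 ^ n := by
  induction n with
  | zero => simp [Nat.ofDigits_cons]
  | succ k ih =>
    rw [List.replicate_succ, List.cons_append, Nat.ofDigits_cons, pow_succ]
    omega

theorem digits_of_family :
    ∀ n : ℕ, Nat.digits 10 (11 * (10 ^ (n + 2) - 1)) =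
      [9, 8] ++ List.replicate n 9 ++ [0, 1] := by
  intro n
  have hval : 11 * (10 ^ (n + 2) - 1) =
      Nat.ofDigits 10 ([9, 8] ++ List.replicate n 9 ++ [0, 1]) := by
    have h := ofDigits_nines_tail n
    simp only [List.cons_append, List.nil_append, Nat.ofDigits_cons, pow_succ]
    omega
  rw [hval]
  apply Nat.digits_ofDigits 10 (by norm_num)
  · intro d hd
    simp only [List.mem_append, List.mem_cons, List.mem_replicate, List.not_mem_nil,
      or_false] at hd
    omega
  · intro _
    simp
end

section
/- For every natural number n ≥ 1, setting D(n) = 11·(10^(n+4) − 1)·10^(n+2), one has rev(D(n)) = 99·(10^(n+4) − 1), this value is strictly smaller than D(n), and hence f(D(n)) = (10^(n+4) − 1)·(11·10^(n+2) − 99). -/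
/-- A block of `k` nines represents `10 ^ k - 1`, stated without truncated subtraction. -/
lemma ofDigits_nines (k : ℕ) : Nat.ofDigits 10 (List.replicate k 9) + 1 = 10 ^ k := by
  induction k with
  | zero => simp
  | succ k ih =>
    rw [List.replicate_succ, Nat.ofDigits_cons, pow_succ]
    omega

lemma ofDigits_zeros (k : ℕ) : Nat.ofDigits 10 (List.replicate k 0) = 0 := by
  induction k with
  | zero => simp
  | succ k ih => rw [List.replicate_succ, Nat.ofDigits_cons, ih]

/-- The base-10 digits of `D(n)`, least significant first. -/
lemma digits_family (n : ℕ) :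
    Nat.digits 10 (11 * (10 ^ (n + 4) - 1) * 10 ^ (n + 2)) =
      List.replicate (n + 2) 0 ++ ([9, 8] ++ (List.replicate (n + 2) 9 ++ [0, 1])) := by
  have value : Nat.ofDigits 10
      (List.replicate (n + 2) 0 ++ ([9, 8] ++ (List.replicate (n + 2) 9 ++ [0, 1]))) =
      11 * (10 ^ (n + 4) - 1) * 10 ^ (n + 2) := by
    have nines := ofDigits_nines (n + 2)
    have shift : 10 ^ (n + 4) = 100 * 10 ^ (n + 2) := by ring
    simp only [Nat.ofDigits_append, ofDigits_zeros, List.length_replicate, List.length_cons,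
      List.length_nil, Nat.ofDigits_cons, Nat.ofDigits_nil]
    rw [zero_add, mul_comm, shift]
    congr 1
    push_cast
    omega
  rw [← value]
  apply Nat.digits_ofDigits 10 (by norm_num)
  · intro d hd
    simp only [List.mem_append, List.mem_replicate, List.mem_cons, List.not_mem_nil,
      or_false] at hd
    rcases hd with h | (h | h) | h | h | h <;> omega
  · intro h
    simp

lemma rev_family (n : ℕ) :
    rev (11 * (10 ^ (n + 4) - 1) * 10 ^ (n + 2)) = 99 * (10 ^ (n + 4) - 1) := by
  have nines := ofDigits_nines (n + 2)
  have shift : 10 ^ (n + 4) = 100 * 10 ^ (n + 2) := by ring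
  have pow_split : 10 ^ (n + 2 + 1) = 10 * 10 ^ (n + 2) := by ring
  rw [rev, digits_family]
  simp only [List.reverse_append, List.reverse_replicate, List.reverse_cons, List.reverse_nil,
    List.nil_append, List.cons_append, Nat.ofDigits_append, ofDigits_zeros, List.length_replicate,
    List.length_append, List.length_cons, List.length_nil, zero_add, Nat.ofDigits_cons,
    Nat.ofDigits_nil]
  rw [shift]
  push_cast
  omega

theorem diverging_family_step :
    ∀ n : ℕ, 1 ≤ n →
      rev (11 * (10 ^ (n + 4) - 1) * 10 ^ (n + 2)) = 99 * (10 ^ (n + 4) - 1) ∧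
      99 * (10 ^ (n + 4) - 1) < 11 * (10 ^ (n + 4) - 1) * 10 ^ (n + 2) ∧
      f (11 * (10 ^ (n + 4) - 1) * 10 ^ (n + 2)) =
        (10 ^ (n + 4) - 1) * (11 * 10 ^ (n + 2) - 99) := by
  intro n _
  have hlt : 99 * (10 ^ (n + 4) - 1) < 11 * (10 ^ (n + 4) - 1) * 10 ^ (n + 2) := by
    have factor_pos : 0 < 10 ^ (n + 4) - 1 :=
      Nat.sub_pos_of_lt (Nat.one_lt_pow (by omega) (by omega))
    have pow_ge : 10 ^ 2 ≤ 10 ^ (n + 2) := Nat.pow_le_pow_right (by norm_num) (by omega)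
    nlinarith
  refine ⟨rev_family n, hlt, ?_⟩
  rw [f, rev_family, if_pos hlt]
  generalize 10 ^ (n + 4) - 1 = a
  rw [Nat.mul_sub, mul_comm 99, mul_comm 11, mul_assoc]
end

section
/- Every state lying on a cycle of the digit-reversal map f is divisible by 99: if n ≥ 1, p ≥ 1 and f^[p](n) = n, then 99 divides n. -/
/-! ### Lengths and digits of reversals -/

/-- The number of decimal digits of `n` (and `0` for `n = 0`). -/
def len (n : ℕ) : ℕ := (Nat.digits 10 n).length

lemma len_le_iff (n k : ℕ) : len n ≤ k ↔ n < 10 ^ k := Nat.digits_length_le_iff (by norm_num) n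

lemma lt_len_iff (n k : ℕ) : k < len n ↔ 10 ^ k ≤ n := Nat.lt_digits_length_iff (by norm_num) n

lemma digit_ofDigits (L : List ℕ) (hL : ∀ a ∈ L, a < 10) (i : ℕ) :
    Nat.ofDigits 10 L / 10 ^ i % 10 = L.getD i 0 := by
  induction L generalizing i with
  | nil => simp
  | cons a L ih =>
    have ha := hL a (by simp)
    rw [Nat.ofDigits_cons]
    cases i with
    | zero => simp; omega
    | succ i =>
      rw [pow_succ', ← Nat.div_div_eq_div_mul]
      have : ((a + 10 * Nat.ofDigits 10 L) / 10) = Nat.ofDigits 10 L := by omega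
      rw [this, ih (fun b hb => hL b (by simp [hb]))]
      simp

lemma rev_lt (n : ℕ) : rev n < 10 ^ len n := by
  have := Nat.ofDigits_lt_base_pow_length (b := 10) (l := (Nat.digits 10 n).reverse) (by norm_num)
    (fun a ha => Nat.digits_lt_base (by norm_num) (List.mem_reverse.1 ha))
  simpa [rev, len] using this

lemma digit_rev (n i : ℕ) (hi : i < len n) :
    rev n / 10 ^ i % 10 = n / 10 ^ (len n - 1 - i) % 10 := by
  unfold len at *
  rw [rev, digit_ofDigits _
    (fun a ha => Nat.digits_lt_base (by norm_num) (List.mem_reverse.1 ha)),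
    ← Nat.getD_digits n _ (by norm_num : 2 ≤ 10)]
  rw [List.getD_eq_getElem _ _ (by simpa using hi), List.getD_eq_getElem _ _ (by omega),
    List.getElem_reverse]

/-! ### Reversal modulo 9 and 11 -/

lemma rev_modEq_nine (n : ℕ) : rev n ≡ n [MOD 9] := by
  have h1 : rev n ≡ Nat.ofDigits 1 ((Nat.digits 10 n).reverse) [MOD 9] :=
    Nat.ofDigits_modEq' 10 1 9 (by decide) _
  rw [Nat.ofDigits_one, List.sum_reverse] at h1
  exact h1.trans (Nat.modEq_nine_digits_sum n).symm

/-- Reversal multiplies the alternating digit sum by `(-1) ^ (length - 1)`; the extra factor `-1`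
avoids the truncated subtraction. -/
lemma ofDigits_neg_one_reverse (L : List ℕ) :
    Nat.ofDigits (-1 : ℤ) L.reverse * (-1) = (-1) ^ L.length * Nat.ofDigits (-1 : ℤ) L := by
  have cons : ∀ (a : ℕ) (A : List ℕ), Nat.ofDigits (-1 : ℤ) (a :: A) =
      a + (-1) * Nat.ofDigits (-1 : ℤ) A := fun _ _ => rfl
  have nil : Nat.ofDigits (-1 : ℤ) [] = 0 := rfl
  have app : ∀ (A : List ℕ) (a : ℕ), Nat.ofDigits (-1 : ℤ) (A ++ [a]) =
      Nat.ofDigits (-1 : ℤ) A + (-1) ^ A.length * a := by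
    intro A a
    induction A with
    | nil => simp [cons, nil]
    | cons b A ih => rw [List.cons_append, cons, cons, ih, List.length_cons]; ring
  induction L with
  | nil => simp [nil]
  | cons a L ih =>
    rw [List.reverse_cons, app, cons, add_mul, ih, List.length_reverse, List.length_cons]
    ring

lemma rev_modEq_eleven (n : ℕ) : -(rev n : ℤ) ≡ (-1) ^ len n * n [ZMOD 11] := by
  have h1 : (rev n : ℤ) ≡ Nat.ofDigits (-1 : ℤ) (Nat.digits 10 n).reverse [ZMOD 11] := by
    rw [rev, Nat.coe_ofDigits]
    exact Nat.ofDigits_zmodeq' _ _ 11 (by decide) _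
  have h2 : (n : ℤ) ≡ Nat.ofDigits (-1 : ℤ) (Nat.digits 10 n) [ZMOD 11] := by
    conv_lhs => rw [← Nat.ofDigits_digits 10 n, Nat.coe_ofDigits]
    exact Nat.ofDigits_zmodeq' _ _ 11 (by decide) _
  have h3 := ofDigits_neg_one_reverse (Nat.digits 10 n)
  have h4 := (h2.mul_left ((-1) ^ len n)).symm
  rw [len, ← h3] at h4
  refine Int.ModEq.trans ?_ h4
  rw [mul_neg_one]
  exact h1.neg

lemma rev_eleven_odd {n : ℕ} (h : len n % 2 = 1) : ∃ k : ℤ, (rev n : ℤ) = n + 11 * k := by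
  have h1 := rev_modEq_eleven n
  rw [Odd.neg_one_pow (Nat.odd_iff.2 h)] at h1
  obtain ⟨k, hk⟩ := h1.dvd
  exact ⟨k, by linarith⟩

lemma rev_eleven_even {n : ℕ} (h : len n % 2 = 0) : ∃ k : ℤ, (rev n : ℤ) = -n + 11 * k := by
  have h1 := rev_modEq_eleven n
  rw [Even.neg_one_pow (Nat.even_iff.2 h)] at h1
  obtain ⟨k, hk⟩ := h1.dvd
  exact ⟨k, by linarith⟩

/-! ### Carries -/

/-- The carry into position `i` in the decimal addition `m + n`. -/
def carry (m n i : ℕ) : ℕ := (m % 10 ^ i + n % 10 ^ i) / 10 ^ i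

lemma carry_le (m n i : ℕ) : carry m n i ≤ 1 := by
  have h := Nat.mod_lt m (show 0 < 10 ^ i by positivity)
  have h' := Nat.mod_lt n (show 0 < 10 ^ i by positivity)
  exact Nat.lt_succ_iff.1 ((Nat.div_lt_iff_lt_mul (by positivity)).2 (by omega))

lemma carry_zero (m n : ℕ) : carry m n 0 = 0 := by simp [carry, Nat.mod_one]

lemma carry_of_lt {m n i : ℕ} (hm : m < 10 ^ i) (hn : n < 10 ^ i) :
    carry m n i = (m + n) / 10 ^ i := by
  rw [carry, Nat.mod_eq_of_lt hm, Nat.mod_eq_of_lt hn]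

lemma digit_add (m n i : ℕ) :
    m / 10 ^ i % 10 + n / 10 ^ i % 10 + carry m n i =
      (m + n) / 10 ^ i % 10 + 10 * carry m n (i + 1) := by
  have hq : 0 < 10 ^ i := by positivity
  have h1 : (m + n) / 10 ^ i = m / 10 ^ i + n / 10 ^ i + carry m n i := by
    rw [carry, Nat.add_div hq]
    congr 1
    have h := Nat.mod_lt m hq
    have h' := Nat.mod_lt n hq
    split_ifs with hc
    · exact (Nat.div_eq_of_lt_le (by omega) (by omega)).symm
    · exact (Nat.div_eq_of_lt (by omega)).symm
  have h2 : carry m n (i + 1) = (m / 10 ^ i % 10 + n / 10 ^ i % 10 + carry m n i) / 10 := by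
    rw [carry, carry, pow_succ, Nat.mod_mul, Nat.mod_mul, ← Nat.div_div_eq_div_mul]
    congr 1
    rw [show m % 10 ^ i + 10 ^ i * (m / 10 ^ i % 10) + (n % 10 ^ i + 10 ^ i * (n / 10 ^ i % 10)) =
      m % 10 ^ i + n % 10 ^ i + 10 ^ i * (m / 10 ^ i % 10 + n / 10 ^ i % 10) by ring,
      Nat.add_mul_div_left _ _ hq]
    ring
  have := carry_le m n i
  rw [h1, h2]
  omega

lemma eq_of_digits {m n d : ℕ} (hm : m < 10 ^ d) (hn : n < 10 ^ d)
    (h : ∀ i < d, m / 10 ^ i % 10 = n / 10 ^ i % 10) : m = n := by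
  have key : ∀ i ≤ d, m % 10 ^ i = n % 10 ^ i := by
    intro i hi
    induction i with
    | zero => simp [Nat.mod_one]
    | succ i ih => rw [pow_succ, Nat.mod_mul, Nat.mod_mul, ih (by omega), h i (by omega)]
  simpa [Nat.mod_eq_of_lt hm, Nat.mod_eq_of_lt hn] using key d le_rfl

/-! ### Alternation of lengths -/

/-- Let `x` have length `d` and `y = x + rev x` length `d + 1`, followed by a subtraction step to
`z = y - rev y`.  If lengths `d` and `d + 1` are again followed by an addition and a subtraction
respectively, then `z` has length `d` and the addition at `z` overflows to length `d + 1`.  The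
leading digit of `y` is `1`, so `rev y` ends in `1` and its leading digit, the last digit of `y`, is
at most `1`; hence `z` ends in `0` or `9`.  If it ends in `0`, then `y` and `rev y` both have
leading digit `1`, so `z` has length `d`, and `rev z < z`, which is excluded.  If it ends in `9`,
then `rev z` starts with `9`, which gives the overflow and excludes length `d + 1`. -/
lemma alternate {x d : ℕ} (hd : len x = d) (hd1 : 1 ≤ d)
    (hy : len (x + rev x) = d + 1) (hlt : rev (x + rev x) < x + rev x)
    {z : ℕ} (hz : z = x + rev x - rev (x + rev x))
    (hlen : len z = d ∧ z ≤ rev z ∨ len z = d + 1 ∧ rev z < z) :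
    len z = d ∧ 10 ^ d ≤ z + rev z := by
  obtain ⟨e, rfl⟩ : ∃ e, d = e + 1 := ⟨d - 1, by omega⟩
  have hx : x < 10 ^ (e + 1) := (len_le_iff _ _).1 hd.le
  have hr : rev x < 10 ^ (e + 1) := hd ▸ rev_lt x
  have hq := rev_lt (x + rev x)
  have hge := (lt_len_iff (x + rev x) (e + 1)).1 (by omega)
  have h0 := digit_rev (x + rev x) 0 (by omega)
  have h1 := digit_rev (x + rev x) (e + 1) (by omega)
  rw [hy] at h0 h1 hq
  set y := x + rev x with hydef
  set q := rev y
  simp only [Nat.add_sub_cancel, Nat.sub_zero, Nat.sub_self, pow_zero, Nat.div_one] at h0 h1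
  have hytop : y / 10 ^ (e + 1) = 1 := Nat.div_eq_of_lt_le (by omega) (by omega)
  have hqtop : q / 10 ^ (e + 1) < 10 := (Nat.div_lt_iff_lt_mul (by positivity)).2
    (by rw [pow_succ] at hq; omega)
  rw [Nat.mod_eq_of_lt hqtop] at h1
  rw [hytop] at h0
  have hle : q / 10 ^ (e + 1) ≤ 1 :=
    (Nat.div_le_div_right hlt.le).trans hytop.le
  have hzr := rev_lt z
  rcases hlen with ⟨hl, hzle⟩ | ⟨hl, hzlt⟩
  · refine ⟨hl, ?_⟩
    have h2 := digit_rev z e (by omega)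
    rw [hl] at h2 hzr
    simp only [Nat.add_sub_cancel, Nat.sub_self, pow_zero, Nat.div_one] at h2
    have hzge := (lt_len_iff z e).1 (by omega)
    have hrt : rev z / 10 ^ e < 10 := (Nat.div_lt_iff_lt_mul (by positivity)).2
      (by rw [pow_succ] at hzr; omega)
    rw [Nat.mod_eq_of_lt hrt] at h2
    have h3 : 1 ≤ rev z / 10 ^ e := (Nat.le_div_iff_mul_le (by positivity)).2 (by omega)
    have h4 : rev z / 10 ^ e = 9 := by omega
    have h5 := Nat.div_mul_le_self (rev z) (10 ^ e)
    rw [h4] at h5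
    rw [pow_succ]
    omega
  · exfalso
    have hzge := (lt_len_iff z (e + 1)).1 (by omega)
    have hq0 : q / 10 ^ (e + 1) = 0 := by
      by_contra hne
      have := Nat.div_mul_le_self q (10 ^ (e + 1))
      rw [show q / 10 ^ (e + 1) = 1 by omega] at this
      omega
    have h2 := digit_rev z (e + 1) (by omega)
    rw [hl] at h2
    simp only [Nat.add_sub_cancel, Nat.sub_self, pow_zero, Nat.div_one] at h2
    have h4 : 9 ≤ rev z / 10 ^ (e + 1) := by
      generalize rev z / 10 ^ (e + 1) = r at h2 ⊢
      omega
    have h5 := (Nat.le_div_iff_mul_le (by positivity)).1 h4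
    omega

/-! ### Periodic sequences -/

/-- A periodic sequence of naturals that never decreases is constant. -/
lemma periodic_mono {a : ℕ → ℕ} {p : ℕ} (hp : 1 ≤ p) (hper : ∀ t, a (t + p) = a t)
    (h : ∀ t, a t ≤ a (t + 1)) (t : ℕ) : a (t + 1) = a t :=
  le_antisymm (hper t ▸ monotone_nat_of_le_succ h (by omega)) (h t)

lemma periodic_anti {a : ℕ → ℕ} {p : ℕ} (hp : 1 ≤ p) (hper : ∀ t, a (t + p) = a t)
    (h : ∀ t, a (t + 1) ≤ a t) (t : ℕ) : a (t + 1) = a t :=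
  le_antisymm (h t) (hper t ▸ antitone_nat_of_succ_le h (by omega))

/-! ### The six digit states

Throughout, every quantity is a sequence indexed by `s`, one term for each pair `X s`,
`Y s = X s + rev (X s)`. -/

/-- The state reached after reading `k` digits from either end.  Here `c` and `h` are the carries
of the addition `X s + rev (X s)` at the positions `k` and `d - k`, `b` and `g` are the carries of
`X (s + 1) + rev (Y s)` at the positions `k` and `d + 1 - k`, and `Y`, `W` are the digits at the
position `d - k` of `Y s` and `X s`.  The parameters `e`, `w`, `u` do not depend on `s`. -/
def State (e w u : ℕ) (c h Y b g W : ℕ → ℕ) : Prop :=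
  ∀ s, c s = e ∧ b s = e ∧ g s = e ∧ Y s = h s + 8 * w ∧ W s = u

/-- One of the six states that actually occur. -/
def AnyState (c h Y b g W : ℕ → ℕ) : Prop :=
  State 0 0 0 c h Y b g W ∨ State 1 0 1 c h Y b g W ∨ State 0 1 0 c h Y b g W ∨
  State 0 1 8 c h Y b g W ∨ State 1 1 9 c h Y b g W ∨ State 1 0 9 c h Y b g W

/-- The digit equations connecting the data at `k` with those at `k + 1` (subscript `₂`).  The
letters are as in `State`; `x` and `y` are the digits of `X s` and `Y s` at the position `k`.  The
fields `add_low`, `add_high` come from the addition `X s + rev (X s)` at its two ends, `sub_low`,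
`sub_high` from `X (s + 1) + rev (Y s) = Y s`, and `look` is what remains of `sub_high` at `k + 1`
when its two unknown terms, a digit and a carry, are only bounded. -/
structure Level (x y c h Y b g W c₂ h₂ Y₂ b₂ g₂ W₂ : ℕ → ℕ) : Prop where
  x_le : ∀ s, x s ≤ 9
  y_le : ∀ s, y s ≤ 9
  W_le : ∀ s, W₂ s ≤ 9
  Y_le : ∀ s, Y₂ s ≤ 9
  h_le : ∀ s, h s ≤ 1
  c₂_le : ∀ s, c₂ s ≤ 1
  h₂_le : ∀ s, h₂ s ≤ 1
  b₂_le : ∀ s, b₂ s ≤ 1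
  g₂_le : ∀ s, g₂ s ≤ 1
  add_low : ∀ s, x s + W₂ s + c s = y s + 10 * c₂ s
  add_high : ∀ s, x s + W₂ s + h₂ s = Y₂ s + 10 * h s
  sub_low : ∀ s, x (s + 1) + Y s + b s = y s + 10 * b₂ s
  sub_high : ∀ s, W (s + 1) + y s + g₂ s = Y s + 10 * g s
  look : ∀ s, W₂ (s + 1) ≤ Y₂ s + 10 * g₂ s ∧ Y₂ s + 10 * g₂ s ≤ W₂ (s + 1) + 10

section
variable {x y c h Y b g W c₂ h₂ Y₂ b₂ g₂ W₂ : ℕ → ℕ} {p : ℕ}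

/-- All equations of a level at one index `s`, with the state substituted. -/
lemma Level.pointwise (L : Level x y c h Y b g W c₂ h₂ Y₂ b₂ g₂ W₂) {e w u : ℕ}
    (S : State e w u c h Y b g W) (s : ℕ) :
    x s ≤ 9 ∧ y s ≤ 9 ∧ W₂ s ≤ 9 ∧ Y₂ s ≤ 9 ∧ (h s = 0 ∨ h s = 1) ∧
    (c₂ s = 0 ∨ c₂ s = 1) ∧ h₂ s ≤ 1 ∧ (b₂ s = 0 ∨ b₂ s = 1) ∧ (g₂ s = 0 ∨ g₂ s = 1) ∧
    x s + W₂ s + e = y s + 10 * c₂ s ∧ x s + W₂ s + h₂ s = Y₂ s + 10 * h s ∧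
    x (s + 1) + (h s + 8 * w) + e = y s + 10 * b₂ s ∧
    u + y s + g₂ s = h s + 8 * w + 10 * e ∧
    W₂ (s + 1) ≤ Y₂ s + 10 * g₂ s ∧ Y₂ s + 10 * g₂ s ≤ W₂ (s + 1) + 10 := by
  obtain ⟨h1, h2, h3, h4, h5⟩ := S s
  obtain ⟨-, -, -, -, h6⟩ := S (s + 1)
  have := L.add_low s
  have := L.sub_low s
  have := L.sub_high s
  have := L.look s
  exact ⟨L.x_le s, L.y_le s, L.W_le s, L.Y_le s, Nat.le_one_iff_eq_zero_or_eq_one.1 (L.h_le s),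
    Nat.le_one_iff_eq_zero_or_eq_one.1 (L.c₂_le s), L.h₂_le s,
    Nat.le_one_iff_eq_zero_or_eq_one.1 (L.b₂_le s), Nat.le_one_iff_eq_zero_or_eq_one.1 (L.g₂_le s),
    by omega, L.add_high s, by omega, by omega, by omega, by omega⟩

/-- Along a periodic sequence every term is a successor term. -/
lemma all_of_succ (hp : 1 ≤ p) (hper : ∀ s, x (s + p) = x s) {P : ℕ → Prop}
    (hP : ∀ s, P (x (s + 1))) (s : ℕ) : P (x s) := by
  have := hP (s + p - 1)
  rwa [show s + p - 1 + 1 = s + p by omega, hper] at this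

lemma eq_zero_of_succ (h : ∀ t, x (t + 1) = x t) (t : ℕ) : x t = x 0 := by
  induction t with
  | zero => rfl
  | succ n ih => rw [h, ih]

lemma Level.step_000 (L : Level x y c h Y b g W c₂ h₂ Y₂ b₂ g₂ W₂) (hp : 1 ≤ p)
    (hper : ∀ s, x (s + p) = x s) (S : State 0 0 0 c h Y b g W) :
    (∀ s, x (s + 1) = x s) ∧ AnyState c₂ h₂ Y₂ b₂ g₂ W₂ := by
  have F := L.pointwise S
  have D : ∀ s, x s = 0 ∨ x s = 9 :=
    all_of_succ (P := fun n => n = 0 ∨ n = 9) hp hper fun s => by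
      obtain ⟨-, h2, -, -, hh, -, -, hb, hg, -, -, h8, h9, -⟩ := F s
      have h10 := L.x_le (s + 1)
      rcases hh with hh | hh <;> rcases hg with hg | hg <;> omega
  have K := periodic_anti (a := x) hp hper (fun s => by
    have := F s; have := D s; have := D (s + 1); omega)
  refine ⟨K, ?_⟩
  have C := eq_zero_of_succ K
  rcases D 0 with h0 | h0
  · refine .inl fun s => ?_
    have := F s; have := C s; have := C (s + 1); omega
  · refine .inr (.inl fun s => ?_)
    have := F s; have := C s; have := C (s + 1); omega

lemma Level.step_101 (L : Level x y c h Y b g W c₂ h₂ Y₂ b₂ g₂ W₂) (hp : 1 ≤ p)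
    (hper : ∀ s, x (s + p) = x s) (S : State 1 0 1 c h Y b g W) :
    (∀ s, x (s + 1) = x s) ∧ State 0 1 0 c₂ h₂ Y₂ b₂ g₂ W₂ := by
  have F := L.pointwise S
  have D : ∀ s, x s = 7 ∨ x s = 8 :=
    all_of_succ (P := fun n => n = 7 ∨ n = 8) hp hper fun s => by
      obtain ⟨-, h2, -, -, hh, -, -, hb, hg, -, -, h8, h9, -⟩ := F s
      have h10 := L.x_le (s + 1)
      rcases hh with hh | hh <;> rcases hg with hg | hg <;> omega
  have T : ∀ s, x s + W₂ s = x (s + 1) ∧ c₂ s = 0 ∧ b₂ s = 0 ∧ g₂ s + x (s + 1) = 8 ∧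
      Y₂ s = h₂ s + x (s + 1) := fun s => by
    have := F s; have := D s; have := D (s + 1); omega
  have K := periodic_mono (a := x) hp hper (fun s => by have := T s; omega)
  refine ⟨K, fun s => ?_⟩
  have := T s; have := T (s + 1); have := K s; have := K (s + 1); have := D s
  have := L.look s; omega

set_option maxHeartbeats 1000000 in
/-- The third alternative in `T` is excluded by `look` and the equations at `s + 1`. -/
lemma Level.step_010 (L : Level x y c h Y b g W c₂ h₂ Y₂ b₂ g₂ W₂) (hp : 1 ≤ p)
    (hper : ∀ s, x (s + p) = x s) (S : State 0 1 0 c h Y b g W) :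
    (∀ s, x (s + 1) = x s) ∧ AnyState c₂ h₂ Y₂ b₂ g₂ W₂ := by
  have F := L.pointwise S
  have D : ∀ s, x s = 0 ∨ x s = 9 :=
    all_of_succ (P := fun n => n = 0 ∨ n = 9) hp hper fun s => by
      obtain ⟨-, h2, -, -, hh, -, -, hb, hg, -, -, h8, h9, -⟩ := F s
      have h10 := L.x_le (s + 1)
      rcases hh with hh | hh <;> rcases hg with hg | hg <;> omega
  have T : ∀ s, (x s = 0 ∧ W₂ s = 8 ∧ x (s + 1) = 0 ∧ c₂ s = 0 ∧ b₂ s = 0 ∧ g₂ s = 0 ∧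
        Y₂ s = h₂ s + 8) ∨
      (x s = 0 ∧ W₂ s = 7 ∧ x (s + 1) = 9) ∨
      (x s + W₂ s = 9 ∧ x (s + 1) = 0 ∧ Y₂ s = 0 ∧ g₂ s = 0) ∨
      (x s = 9 ∧ W₂ s = 9 ∧ x (s + 1) = 9 ∧ c₂ s = 1 ∧ b₂ s = 1 ∧ g₂ s = 1 ∧
        Y₂ s = h₂ s + 8) := fun s => by
    obtain ⟨h1, h2, h3, h4, hh, hc, h5, hb, hg, h6, h7, h8, h9, -⟩ := F s
    rcases hh with hh | hh <;> rcases hg with hg | hg <;> rcases D s with h0 | h0 <;>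
      rcases hc with hc | hc <;> rcases D (s + 1) with h00 | h00 <;> omega
  have K := periodic_mono (a := x) hp hper (fun s => by
    have := T s; have := T (s + 1); have := L.look s; omega)
  refine ⟨K, ?_⟩
  have C := eq_zero_of_succ K
  rcases D 0 with h0 | h0
  · refine .inr (.inr (.inr (.inl fun s => ?_)))
    have := T s; have := T (s + 1); have := L.look s; have := C s; have := C (s + 1); omega
  · refine .inr (.inr (.inr (.inr (.inl fun s => ?_))))
    have := T s; have := C s; have := C (s + 1); omega

lemma Level.step_018 (L : Level x y c h Y b g W c₂ h₂ Y₂ b₂ g₂ W₂) (hp : 1 ≤ p)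
    (hper : ∀ s, x (s + p) = x s) (S : State 0 1 8 c h Y b g W) :
    (∀ s, x (s + 1) = x s) ∧ State 1 0 9 c₂ h₂ Y₂ b₂ g₂ W₂ := by
  have F := L.pointwise S
  have D : ∀ s, x s = 1 ∨ x s = 2 :=
    all_of_succ (P := fun n => n = 1 ∨ n = 2) hp hper fun s => by
      obtain ⟨-, h2, -, -, hh, -, -, hb, hg, -, -, h8, h9, -⟩ := F s
      have h10 := L.x_le (s + 1)
      rcases hh with hh | hh <;> rcases hg with hg | hg <;> omega
  have T : ∀ s, x s + W₂ s = 9 + x (s + 1) ∧ c₂ s = 1 ∧ b₂ s = 1 ∧ g₂ s + x (s + 1) = 2 ∧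
      Y₂ s + 1 = h₂ s + x (s + 1) := fun s => by
    have := F s; have := D s; have := D (s + 1); omega
  have K := periodic_anti (a := x) hp hper (fun s => by
    have := T s; have := L.W_le s; omega)
  refine ⟨K, fun s => ?_⟩
  have := T s; have := T (s + 1); have := K s; have := K (s + 1); have := D s
  have := L.look s; have := L.h₂_le s; omega

lemma Level.step_119 (L : Level x y c h Y b g W c₂ h₂ Y₂ b₂ g₂ W₂) (hp : 1 ≤ p)
    (hper : ∀ s, x (s + p) = x s) (S : State 1 1 9 c h Y b g W) :
    (∀ s, x (s + 1) = x s) ∧ AnyState c₂ h₂ Y₂ b₂ g₂ W₂ := by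
  have F := L.pointwise S
  have D : ∀ s, x s = 0 ∨ x s = 9 :=
    all_of_succ (P := fun n => n = 0 ∨ n = 9) hp hper fun s => by
      obtain ⟨-, h2, -, -, hh, -, -, hb, hg, -, -, h8, h9, -⟩ := F s
      have h10 := L.x_le (s + 1)
      rcases hh with hh | hh <;> rcases hg with hg | hg <;> omega
  have K := periodic_mono (a := x) hp hper (fun s => by
    have := F s; have := D s; have := D (s + 1); omega)
  refine ⟨K, ?_⟩
  have C := eq_zero_of_succ K
  rcases D 0 with h0 | h0
  · refine .inr (.inr (.inr (.inl fun s => ?_)))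
    have := F s; have := C s; have := C (s + 1); omega
  · refine .inr (.inr (.inr (.inr (.inl fun s => ?_))))
    have := F s; have := C s; have := C (s + 1); omega

set_option maxHeartbeats 1000000 in
/-- The second alternative in `T` is excluded by `look` and the equations at `s + 1`.
-/
lemma Level.step_109 (L : Level x y c h Y b g W c₂ h₂ Y₂ b₂ g₂ W₂) (hp : 1 ≤ p)
    (hper : ∀ s, x (s + p) = x s) (S : State 1 0 9 c h Y b g W) :
    (∀ s, x (s + 1) = x s) ∧ AnyState c₂ h₂ Y₂ b₂ g₂ W₂ := by
  have F := L.pointwise S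
  have D : ∀ s, x s = 0 ∨ x s = 9 :=
    all_of_succ (P := fun n => n = 0 ∨ n = 9) hp hper fun s => by
      obtain ⟨-, h2, -, -, hh, -, -, hb, hg, -, -, h8, h9, -⟩ := F s
      have h10 := L.x_le (s + 1)
      rcases hh with hh | hh <;> rcases hg with hg | hg <;> omega
  have T : ∀ s, (x s = 0 ∧ W₂ s = 0 ∧ x (s + 1) = 0 ∧ c₂ s = 0 ∧ b₂ s = 0 ∧ g₂ s = 0 ∧
        Y₂ s = h₂ s) ∨
      (x s + W₂ s = 9 ∧ x (s + 1) = 9 ∧ Y₂ s = 9 ∧ g₂ s = 1) ∨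
      (x s = 9 ∧ W₂ s = 2 ∧ x (s + 1) = 0) ∨
      (x s = 9 ∧ W₂ s = 1 ∧ x (s + 1) = 9 ∧ c₂ s = 1 ∧ b₂ s = 1 ∧ g₂ s = 1 ∧
        Y₂ s = h₂ s) := fun s => by
    obtain ⟨h1, h2, h3, h4, hh, hc, h5, hb, hg, h6, h7, h8, h9, -⟩ := F s
    rcases hh with hh | hh <;> rcases hg with hg | hg <;> rcases D s with h0 | h0 <;>
      rcases hc with hc | hc <;> rcases D (s + 1) with h00 | h00 <;> omega
  have K := periodic_anti (a := x) hp hper (fun s => by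
    have := T s; have := T (s + 1); have := L.look s; omega)
  refine ⟨K, ?_⟩
  have C := eq_zero_of_succ K
  rcases D 0 with h0 | h0
  · refine .inl fun s => ?_
    have := T s; have := C s; have := C (s + 1); omega
  · refine .inr (.inl fun s => ?_)
    have := T s; have := T (s + 1); have := L.look s; have := C s; have := C (s + 1); omega

/-- The six states are closed under reading one more digit, and that digit does not depend on `s`.
-/
lemma Level.step (L : Level x y c h Y b g W c₂ h₂ Y₂ b₂ g₂ W₂) (hp : 1 ≤ p)
    (hper : ∀ s, x (s + p) = x s) (S : AnyState c h Y b g W) :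
    (∀ s, x (s + 1) = x s) ∧ AnyState c₂ h₂ Y₂ b₂ g₂ W₂ := by
  rcases S with S | S | S | S | S | S
  · exact L.step_000 hp hper S
  · exact (L.step_101 hp hper S).imp_right fun h => .inr (.inr (.inl h))
  · exact L.step_010 hp hper S
  · exact (L.step_018 hp hper S).imp_right fun h => .inr (.inr (.inr (.inr (.inr h))))
  · exact L.step_119 hp hper S
  · exact L.step_109 hp hper S
end

/-! ### The numbers of odd length form a constant sequence -/

/-- A periodic sequence of `d`-digit numbers in which each term arises from the previous one by an
overflowing addition followed by a subtraction is constant. -/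
lemma stationary {X : ℕ → ℕ} {d p : ℕ} (hp : 1 ≤ p) (hper : ∀ s, X (s + p) = X s)
    (hX : ∀ s, len (X s) = d) (hY : ∀ s, len (X s + rev (X s)) = d + 1)
    (hsub : ∀ s, X (s + 1) + rev (X s + rev (X s)) = X s + rev (X s)) (s : ℕ) :
    X (s + 1) = X s := by
  let Z : ℕ → ℕ := fun s => X s + rev (X s)
  let x : ℕ → ℕ → ℕ := fun k s => X s / 10 ^ k % 10
  let y : ℕ → ℕ → ℕ := fun k s => Z s / 10 ^ k % 10
  let c : ℕ → ℕ → ℕ := fun k s => carry (X s) (rev (X s)) k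
  let b : ℕ → ℕ → ℕ := fun k s => carry (X (s + 1)) (rev (Z s)) k
  have lt10 (n : ℕ) : n % 10 ≤ 9 := Nat.le_of_lt_succ (Nat.mod_lt _ (by norm_num))
  have hlt (s : ℕ) : X s < 10 ^ d := (len_le_iff _ _).1 (hX s).le
  have add (s k : ℕ) (hk : k < d) :
      x k s + x (d - (k + 1)) s + c k s = y k s + 10 * c (k + 1) s := by
    have h1 := digit_add (X s) (rev (X s)) k
    rw [digit_rev _ _ (by rw [hX]; exact hk), hX, show d - 1 - k = d - (k + 1) by omega] at h1
    exact h1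
  have sub (s k : ℕ) (hk : k ≤ d) :
      x k (s + 1) + y (d - k) s + b k s = y k s + 10 * b (k + 1) s := by
    have h1 := digit_add (X (s + 1)) (rev (Z s)) k
    rw [digit_rev (Z s) _ (by rw [hY]; omega), hY, hsub, Nat.add_sub_cancel] at h1
    exact h1
  have sub' (s k : ℕ) (hk : k ≤ d) :
      x (d - k) (s + 1) + y k s + b (d + 1 - (k + 1)) s = y (d - k) s + 10 * b (d + 1 - k) s := by
    have h1 := sub s (d - k) (by omega)
    rw [show d - (d - k) = k by omega] at h1
    rw [show d + 1 - (k + 1) = d - k by omega, show d + 1 - k = d - k + 1 by omega]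
    exact h1
  have level (k : ℕ) (hk : k < d) : Level (x k) (y k)
      (c k) (c (d - k)) (y (d - k)) (b k) (b (d + 1 - k)) (x (d - k))
      (c (k + 1)) (c (d - (k + 1))) (y (d - (k + 1))) (b (k + 1)) (b (d + 1 - (k + 1)))
      (x (d - (k + 1))) :=
    { x_le := fun _ => lt10 _
      y_le := fun _ => lt10 _
      W_le := fun _ => lt10 _
      Y_le := fun _ => lt10 _
      h_le := fun _ => carry_le _ _ _
      c₂_le := fun _ => carry_le _ _ _
      h₂_le := fun _ => carry_le _ _ _
      b₂_le := fun _ => carry_le _ _ _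
      g₂_le := fun _ => carry_le _ _ _
      add_low := fun s => add s k hk
      add_high := fun s => by
        have h1 := add s (d - (k + 1)) (by omega)
        rw [show d - (d - (k + 1) + 1) = k by omega, show d - (k + 1) + 1 = d - k by omega] at h1
        rw [add_comm (x k s)]
        exact h1
      sub_low := fun s => sub s k hk.le
      sub_high := fun s => sub' s k hk.le
      look := fun s => by
        have h1 := sub' s (k + 1) hk
        have h2 : y (k + 1) s ≤ 9 := lt10 _
        have h3 : b (d + 1 - (k + 1 + 1)) s ≤ 1 := carry_le _ _ _
        omega }
  have perx (k s : ℕ) : x k (s + p) = x k s := by simp only [x, hper]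
  -- The leading digit of `Y s` is the carry out of the addition, which is `1`.
  have base : State 0 0 0 (c 0) (c (d - 0)) (y (d - 0)) (b 0) (b (d + 1 - 0)) (x (d - 0)) := by
    intro s
    have h1 := hlt s
    have h2 : rev (X s) < 10 ^ d := hX s ▸ rev_lt (X s)
    have h3 : 10 ^ d ≤ X s + rev (X s) := (lt_len_iff _ _).1 (by rw [hY]; omega)
    have h4 : (X s + rev (X s)) / 10 ^ d = 1 := Nat.div_eq_of_lt_le (by omega) (by omega)
    have h5 : c d s = 1 := (carry_of_lt h1 h2).trans h4
    have h6 : y d s = 1 := by simp only [y, Z, h4]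
    have h7 : x d s = 0 := by simp only [x, Nat.div_eq_of_lt h1]
    have h8 : b (d + 1) s = 0 := by
      have h9 : X s + rev (X s) < 10 ^ (d + 1) := (len_le_iff _ _).1 (hY s).le
      have h10 := hsub s
      refine (carry_of_lt (by omega) (by simp only [Z]; omega)).trans ?_
      simp only [Z, h10]
      exact Nat.div_eq_of_lt h9
    refine ⟨carry_zero _ _, carry_zero _ _, h8, ?_, h7⟩
    rw [Nat.sub_zero, h5, h6]
  have all (k : ℕ) (hk : k ≤ d) :
      AnyState (c k) (c (d - k)) (y (d - k)) (b k) (b (d + 1 - k)) (x (d - k)) := by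
    induction k with
    | zero => exact .inl base
    | succ k ih => exact ((level k hk).step hp (perx k) (ih (by omega))).2
  exact eq_of_digits (hlt _) (hlt _) fun k hk =>
    ((level k hk).step hp (perx k) (all k hk.le)).1 s

/-! ### Cycles -/

lemma f_of_lt {n : ℕ} (h : rev n < n) : f n = n - rev n := if_pos h

lemma f_of_le {n : ℕ} (h : n ≤ rev n) : f n = n + rev n := if_neg (by omega)

lemma eleven_dvd_f {n : ℕ} (h : 11 ∣ n) : 11 ∣ f n := by
  have h1 : 11 ∣ rev n := by
    rcases Nat.mod_two_eq_zero_or_one (len n) with h2 | h2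
    · obtain ⟨k, hk⟩ := rev_eleven_even h2
      omega
    · obtain ⟨k, hk⟩ := rev_eleven_odd h2
      omega
  unfold f
  split_ifs <;> omega

lemma nine_dvd_f {n : ℕ} (h : 9 ∣ n) : 9 ∣ f n := by
  have h1 := rev_modEq_nine n
  unfold Nat.ModEq at h1
  unfold f
  split_ifs <;> omega

/-- If `f n` is not a multiple of `11`, the parity of the length of `n` decides between addition and
subtraction. -/
lemma step_cases {n : ℕ} (h : ¬ 11 ∣ f n) :
    (len n % 2 = 1 ∧ n ≤ rev n ∧ f n = n + rev n) ∨
      (len n % 2 = 0 ∧ rev n < n ∧ f n = n - rev n) := by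
  rcases Nat.mod_two_eq_zero_or_one (len n) with h2 | h2
  · obtain ⟨k, hk⟩ := rev_eleven_even h2
    rcases lt_or_ge (rev n) n with h1 | h1
    · exact .inr ⟨h2, h1, f_of_lt h1⟩
    · rw [f_of_le h1] at h
      omega
  · obtain ⟨k, hk⟩ := rev_eleven_odd h2
    rcases lt_or_ge (rev n) n with h1 | h1
    · rw [f_of_lt h1] at h
      omega
    · exact .inl ⟨h2, h1, f_of_le h1⟩

/-- A property preserved by `f` that holds somewhere on a cycle holds at its start. -/
lemma of_orbit {n p t : ℕ} (hp : 1 ≤ p) (hcyc : f^[p] n = n) {P : ℕ → Prop}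
    (hP : ∀ m, P m → P (f m)) (ht : P (f^[t] n)) : P n := by
  have h1 : ∀ j, P (f^[t + j] n) := fun j => by
    induction j with
    | zero => exact ht
    | succ j ih => rw [← add_assoc, Function.iterate_succ_apply']; exact hP _ ih
  have h2 := h1 (p * t - t)
  rwa [Nat.add_sub_cancel' (Nat.le_mul_of_pos_left t hp), Function.iterate_mul,
    Function.iterate_fixed hcyc] at h2

lemma nine_dvd_of_cycle {n p : ℕ} (hp : 1 ≤ p) (hcyc : f^[p] n = n)
    (hpos : ∀ t, 0 < f^[t] n) (hper : ∀ t, f^[t + p] n = f^[t] n) : 9 ∣ n := by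
  obtain ⟨t, ht⟩ : ∃ t, rev (f^[t] n) < f^[t] n := by
    by_contra! hno
    have hs (t : ℕ) : f^[t + 1] n = f^[t] n + rev (f^[t] n) := by
      rw [Function.iterate_succ_apply', f_of_le (hno t)]
    have h1 := periodic_mono (a := fun t => f^[t] n) hp hper (fun t => by
      simp only [hs]; omega) 0
    have h2 := hs 0
    have h3 := hno 0
    have h4 := hpos 0
    omega
  refine of_orbit (t := t + 1) hp hcyc (fun m => nine_dvd_f) ?_
  rw [Function.iterate_succ_apply', f_of_lt ht]
  have h1 := rev_modEq_nine (f^[t] n)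
  unfold Nat.ModEq at h1
  omega

/-- Only an addition can lengthen a number, by one digit, and it starts from an odd length; so half
the length, rounded up, never increases. -/
lemma len_step_le {n : ℕ} (h : ¬ 11 ∣ f n) : (len (f n) + 1) / 2 ≤ (len n + 1) / 2 := by
  have h1 : n < 10 ^ len n := (len_le_iff _ _).1 le_rfl
  rcases step_cases h with ⟨h2, -, h4⟩ | ⟨h2, -, h4⟩
  · have h5 : len (f n) ≤ len n + 1 := by
      rw [len_le_iff, h4, pow_succ]
      have := rev_lt n
      omega
    omega
  · have h5 : len (f n) ≤ len n := by
      rw [len_le_iff, h4]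
      omega
    omega

/-- Steps of only one kind would make the sequence strictly monotone, so somewhere an odd length is
followed by an even one. -/
lemma exists_enter {a : ℕ → ℕ} {p : ℕ} (hp : 1 ≤ p) (hper : ∀ t, a (t + p) = a t)
    (hpos : ∀ t, 0 < a t)
    (hstep : ∀ t, (len (a t) % 2 = 1 ∧ a t ≤ rev (a t) ∧ a (t + 1) = a t + rev (a t)) ∨
      (len (a t) % 2 = 0 ∧ rev (a t) < a t ∧ a (t + 1) = a t - rev (a t)))
    (hrev : ∀ t, 0 < rev (a t)) :
    ∃ t, len (a t) % 2 = 1 ∧ len (a (t + 1)) % 2 = 0 := by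
  obtain ⟨t, ht⟩ : ∃ t, len (a t) % 2 = 1 := by
    by_contra! hno
    have h1 := periodic_anti hp hper (fun t => by
      have := hstep t; have := hno t; omega) 0
    have := hstep 0; have := hno 0; have := hrev 0; have := hpos 0
    omega
  by_contra! hno
  have hodd (j : ℕ) : len (a (t + j)) % 2 = 1 := by
    induction j with
    | zero => exact ht
    | succ j ih => have := hno (t + j) ih; rw [← add_assoc]; omega
  have h1 := periodic_mono (a := fun j => a (t + j)) hp (fun j => by
    simp only [← add_assoc, hper]) (fun j => by
      have := hstep (t + j); have := hodd j; simp only [← add_assoc]; omega) 0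
  have := hstep t; have := hrev t
  simp only [zero_add, add_zero] at h1
  omega

lemma eleven_dvd_of_cycle {n p : ℕ} (hp : 1 ≤ p) (hcyc : f^[p] n = n)
    (hpos : ∀ t, 0 < f^[t] n) (hper : ∀ t, f^[t + p] n = f^[t] n) : 11 ∣ n := by
  by_contra hn
  have hnd (t : ℕ) : ¬ 11 ∣ f^[t] n := fun h =>
    hn (of_orbit hp hcyc (fun m => eleven_dvd_f) h)
  set a : ℕ → ℕ := fun t => f^[t] n with ha
  have hsucc (t : ℕ) : f (a t) = a (t + 1) := (Function.iterate_succ_apply' f t n).symm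
  have hstep (t : ℕ) := step_cases (n := a t) (by rw [hsucc]; exact hnd (t + 1))
  simp only [hsucc] at hstep
  have hrev (t : ℕ) : 0 < rev (a t) := by
    by_contra h0
    have h1 := hnd t
    have h2 := hpos t
    rcases Nat.mod_two_eq_zero_or_one (len (a t)) with h3 | h3
    · obtain ⟨k, hk⟩ := rev_eleven_even h3
      simp only [ha] at *
      omega
    · obtain ⟨k, hk⟩ := rev_eleven_odd h3
      simp only [ha] at *
      omega
  have hhalf := eq_zero_of_succ (x := fun t => (len (a t) + 1) / 2)
    (periodic_anti (a := fun t => (len (a t) + 1) / 2) hp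
    (fun t => by simp only [ha, hper]) (fun t => by
      have := len_step_le (n := a t) (by rw [hsucc]; exact hnd (t + 1))
      rwa [hsucc] at this))
  obtain ⟨t₀, hodd, heven⟩ := exists_enter (a := a) hp hper hpos hstep hrev
  obtain ⟨d, hd⟩ : ∃ d, len (a t₀) = d := ⟨_, rfl⟩
  have hlen (t : ℕ) : (len (a t) = d ∧ a t ≤ rev (a t)) ∨
      (len (a t) = d + 1 ∧ rev (a t) < a t) := by
    have := hhalf t; have := hhalf t₀; have := hstep t
    omega
  -- From `t₀` on, the lengths alternate between `d` and `d + 1`.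
  have halt (s : ℕ) : len (a (t₀ + 2 * s)) = d ∧ len (a (t₀ + 2 * s + 1)) = d + 1 := by
    induction s with
    | zero =>
      refine ⟨hd, ?_⟩
      have := hlen (t₀ + 1)
      simp only [mul_zero, add_zero]
      omega
    | succ s ih =>
      obtain ⟨h1, h2⟩ := ih
      set t := t₀ + 2 * s with ht
      rw [show t₀ + 2 * (s + 1) = t + 1 + 1 by omega]
      have h3 := hstep t
      have h4 := hstep (t + 1)
      have hy : a (t + 1) = a t + rev (a t) := by omega
      have hz : a (t + 1 + 1) = a (t + 1) - rev (a (t + 1)) := by omega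
      have hlt : rev (a (t + 1)) < a (t + 1) := by omega
      rw [hy] at h2 hz hlt
      obtain ⟨h5, h6⟩ := alternate h1 (by omega) h2 hlt hz (hlen _)
      refine ⟨h5, ?_⟩
      have h7 := hstep (t + 1 + 1)
      have h8 := hlen (t + 1 + 1 + 1)
      have h9 : a (t + 1 + 1 + 1) = a (t + 1 + 1) + rev (a (t + 1 + 1)) := by omega
      rw [← h9, ← lt_len_iff] at h6
      omega
  have hadd (s : ℕ) : a (t₀ + 2 * s + 1) = a (t₀ + 2 * s) + rev (a (t₀ + 2 * s)) := by
    have := halt s; have := hstep (t₀ + 2 * s); omega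
  have hsub (s : ℕ) : a (t₀ + 2 * (s + 1)) + rev (a (t₀ + 2 * s + 1)) = a (t₀ + 2 * s + 1) := by
    have := halt s; have := hstep (t₀ + 2 * s + 1)
    rw [show t₀ + 2 * (s + 1) = t₀ + 2 * s + 1 + 1 by omega]
    omega
  have hfix := stationary (X := fun s => a (t₀ + 2 * s)) hp
    (fun s => by
      simp only [show t₀ + 2 * (s + p) = t₀ + 2 * s + p + p by omega, ha, hper])
    (fun s => (halt s).1) (fun s => by rw [← hadd]; exact (halt s).2)
    (fun s => by rw [← hadd]; exact hsub s) 0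
  have h1 := hadd 0
  have h2 := hsub 0
  simp only [mul_zero, zero_add, add_zero] at h1 h2 hfix
  obtain ⟨k, hk⟩ := rev_eleven_odd hodd
  obtain ⟨l, hl⟩ := rev_eleven_even heven
  have h3 : ¬ 11 ∣ a t₀ := hnd t₀
  -- Modulo `11`: `y ≡ 2x` and `z = y - rev y ≡ 2y ≡ 4x`, while `z = x`.
  omega

theorem cycle_states_div_99 :
    ∀ n p : ℕ, 1 ≤ n → 1 ≤ p → f^[p] n = n → 99 ∣ n := by
  intro n p hn hp hcyc
  have hper (t : ℕ) : f^[t + p] n = f^[t] n := by rw [Function.iterate_add_apply, hcyc]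
  have hpos (t : ℕ) : 0 < f^[t] n := by
    by_contra h0
    have : n = 0 := of_orbit (t := t) hp hcyc (P := fun m => m = 0)
      (fun m hm => by subst hm; simp [f, rev]) (by omega)
    omega
  have h9 := nine_dvd_of_cycle hp hcyc hpos hper
  have h11 := eleven_dvd_of_cycle hp hcyc hpos hper
  omega
end
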